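/- arXiv:1412.2513 — 4 statements merged into one kernel-verified Lean document; each statement's English description precedes it below -/
import Mathlib

section
/- Let Ω ⊂ ℝ^d be a measurable set with L^d(Ω) < ∞ and let u : Ω → [0,∞) be measurable. Let 1 < p < ∞ and assume 0 < |||u|||_{M^1(Ω)} and |||u|||_{M^p(Ω)} < ∞. Then u ∈ L^1(Ω) and ∫_Ω u dx ≤ (p/(p−1)) · |||u|||_{M^1(Ω)} · [ 1 + log( |||u|||_{M^p(Ω)} · L^d(Ω)^{1−1/p} / |||u|||_{M^1(Ω)} ) ]. -/
/-!
Write `A`, `B` for the weak `L¹` and weak `Lᵖ` quasinorms, `V` for the measure of `Ω`, and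
`m l` for the measure of `{x ∈ Ω | l < |u x|}`. By the layer-cake formula `∫ u = ∫₀^∞ m`, and `m`
satisfies the three bounds `m l ≤ V`, `m l ≤ A / l`, `m l ≤ B ^ p * l ^ (-p)`. Using them on
`(0, a]`, `(a, b]` and `(b, ∞)` respectively gives
`∫ u ≤ a V + A log (b / a) + B ^ p * b ^ (1 - p) / (p - 1)` (`lintegral_le_of_three_bounds`).
The cut-offs are the points where consecutive bounds agree, `a = A / V` and
`b = (B ^ p / A) ^ (1 / (p - 1))`; then `b / a = (B V ^ (1 - 1 / p) / A) ^ (p / (p - 1))` and the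
right-hand side is exactly the claimed one. That `a ≤ b`, and that `A` is finite, both follow from
`A ≤ B V ^ (1 - 1 / p)` (`weakMp_one_le`).
-/

open MeasureTheory ENNReal

/-- The weak Lebesgue (Marcinkiewicz) quasinorm `|||u|||_{M^p(Ω)}`, defined by
`|||u|||_{M^p(Ω)}^p = sup_{λ>0} λ^p · L^d({x ∈ Ω : |u x| > λ})`. -/
noncomputable def weakMp {d : ℕ} (p : ℝ) (Ω : Set (EuclideanSpace ℝ (Fin d)))
    (u : EuclideanSpace ℝ (Fin d) → ℝ) : ℝ≥0∞ :=
  (⨆ (l : ℝ) (_ : 0 < l), ENNReal.ofReal (l ^ p) * volume {x ∈ Ω | l < |u x|}) ^ (1 / p)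

/-- Chebyshev's inequality for the weak quasinorm, in real numbers. -/
lemma rpow_mul_meas_le {d : ℕ} {p : ℝ} (hp : 0 < p) {Ω : Set (EuclideanSpace ℝ (Fin d))}
    {u : EuclideanSpace ℝ (Fin d) → ℝ} (hfin : weakMp p Ω u < ∞) {l : ℝ} (hl : 0 < l) :
    l ^ p * (volume {x ∈ Ω | l < |u x|}).toReal ≤ (weakMp p Ω u).toReal ^ p := by
  have h : ENNReal.ofReal (l ^ p) * volume {x ∈ Ω | l < |u x|} ≤ (weakMp p Ω u) ^ p := by
    rw [weakMp, ← ENNReal.rpow_mul, one_div_mul_cancel hp.ne', ENNReal.rpow_one]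
    exact le_iSup₂ (f := fun (l : ℝ) (_ : 0 < l) =>
      ENNReal.ofReal (l ^ p) * volume {x ∈ Ω | l < |u x|}) l hl
  have h2 := ENNReal.toReal_mono (ENNReal.rpow_ne_top_of_nonneg hp.le hfin.ne) h
  rwa [ENNReal.toReal_mul, ENNReal.toReal_ofReal (by positivity), ← ENNReal.toReal_rpow] at h2

/-- The weak `L¹` quasinorm is controlled by the weak `Lᵖ` one on a set of finite measure:
`l m = (lᵖ m)^(1/p) m^(1 - 1/p)` for the distribution function `m` at level `l`. -/
lemma weakMp_one_le {d : ℕ} {p : ℝ} (hp : 1 < p) {Ω : Set (EuclideanSpace ℝ (Fin d))}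
    (hΩ : volume Ω < ∞) {u : EuclideanSpace ℝ (Fin d) → ℝ} (hfin : weakMp p Ω u < ∞) :
    weakMp 1 Ω u ≤
      ENNReal.ofReal ((weakMp p Ω u).toReal * (volume Ω).toReal ^ (1 - 1 / p)) := by
  have hp0 : 0 < p := by linarith
  rw [weakMp, one_div_one, ENNReal.rpow_one]
  refine iSup₂_le fun l hl => ?_
  have hsub : volume {x ∈ Ω | l < |u x|} ≤ volume Ω := measure_mono fun x hx => hx.1
  have hne : volume {x ∈ Ω | l < |u x|} ≠ ∞ := (hsub.trans_lt hΩ).ne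
  have hcheb := rpow_mul_meas_le hp0 hfin hl
  have hV := ENNReal.toReal_mono hΩ.ne hsub
  rw [← ENNReal.ofReal_toReal hne, ← ENNReal.ofReal_mul (by positivity), Real.rpow_one]
  apply ENNReal.ofReal_le_ofReal
  set m := (volume {x ∈ Ω | l < |u x|}).toReal
  have hm : 0 ≤ m := ENNReal.toReal_nonneg
  have he : 0 < 1 - 1 / p := by
    have : 1 / p < 1 := by rw [div_lt_one hp0]; exact hp
    linarith
  have h1 : l * m ^ (1 / p) ≤ (weakMp p Ω u).toReal := by
    have := Real.rpow_le_rpow (by positivity) hcheb (by positivity : (0 : ℝ) ≤ 1 / p)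
    rwa [Real.mul_rpow (by positivity) hm, ← Real.rpow_mul hl.le,
      ← Real.rpow_mul ENNReal.toReal_nonneg, mul_one_div_cancel hp0.ne', Real.rpow_one,
      Real.rpow_one] at this
  have h2 : m ^ (1 - 1 / p) ≤ (volume Ω).toReal ^ (1 - 1 / p) := Real.rpow_le_rpow hm hV he.le
  have h3 : m = m ^ (1 / p) * m ^ (1 - 1 / p) := by
    rw [← Real.rpow_add_of_nonneg hm (by positivity) he.le]
    simp
  calc l * m = (l * m ^ (1 / p)) * m ^ (1 - 1 / p) := by rw [mul_assoc, ← h3]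
    _ ≤ _ := mul_le_mul h1 h2 (by positivity) ENNReal.toReal_nonneg

/-- Integration of the three bounds on a distribution function over `(0, a]`, `(a, b]` and
`(b, ∞)`. -/
lemma lintegral_le_of_three_bounds {g : ℝ → ℝ≥0∞} {V A K p a b : ℝ} (hV : 0 ≤ V) (hA : 0 ≤ A)
    (hK : 0 ≤ K) (hp : 1 < p) (ha : 0 < a) (hab : a ≤ b)
    (h1 : ∀ t, 0 < t → g t ≤ ENNReal.ofReal V)
    (h2 : ∀ t, 0 < t → g t ≤ ENNReal.ofReal (A * t⁻¹))
    (h3 : ∀ t, 0 < t → g t ≤ ENNReal.ofReal (K * t ^ (-p))) :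
    ∫⁻ t in Set.Ioi (0 : ℝ), g t ≤
      ENNReal.ofReal (a * V + A * Real.log (b / a) + K * (b ^ (1 - p) / (p - 1))) := by
  have hb : 0 < b := ha.trans_le hab
  have e1 : ∫⁻ t in Set.Ioc 0 a, g t ≤ ENNReal.ofReal (a * V) := by
    calc ∫⁻ t in Set.Ioc 0 a, g t ≤ ∫⁻ t in Set.Ioc 0 a, ENNReal.ofReal V :=
          setLIntegral_mono measurable_const fun t ht => h1 t ht.1
      _ = _ := by
          rw [setLIntegral_const, Real.volume_Ioc, sub_zero, mul_comm a V,
            ENNReal.ofReal_mul hV]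
  have e2 : ∫⁻ t in Set.Ioc a b, g t ≤ ENNReal.ofReal (A * Real.log (b / a)) := by
    have hint : IntegrableOn (fun t : ℝ => A * t⁻¹) (Set.Ioc a b) := by
      apply Integrable.const_mul
      refine (ContinuousOn.integrableOn_Icc ?_).mono_set Set.Ioc_subset_Icc_self
      exact continuousOn_id.inv₀ fun t ht => (ha.trans_le ht.1).ne'
    calc ∫⁻ t in Set.Ioc a b, g t ≤ ∫⁻ t in Set.Ioc a b, ENNReal.ofReal (A * t⁻¹) :=
          setLIntegral_mono (by fun_prop) fun t ht => h2 t (ha.trans ht.1)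
      _ = ENNReal.ofReal (∫ t in Set.Ioc a b, A * t⁻¹) := by
          rw [ofReal_integral_eq_lintegral_ofReal hint]
          filter_upwards [ae_restrict_mem measurableSet_Ioc] with t ht
          have := ha.trans ht.1
          simp only [Pi.zero_apply]
          positivity
      _ = _ := by
          rw [integral_const_mul, ← intervalIntegral.integral_of_le hab,
            integral_inv_of_pos ha hb]
  have e3 : ∫⁻ t in Set.Ioi b, g t ≤ ENNReal.ofReal (K * (b ^ (1 - p) / (p - 1))) := by
    have hint : IntegrableOn (fun t : ℝ => K * t ^ (-p)) (Set.Ioi b) :=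
      (integrableOn_Ioi_rpow_of_lt (by linarith) hb).const_mul K
    calc ∫⁻ t in Set.Ioi b, g t ≤ ∫⁻ t in Set.Ioi b, ENNReal.ofReal (K * t ^ (-p)) :=
          setLIntegral_mono (by fun_prop) fun t ht => h3 t (hb.trans ht)
      _ = ENNReal.ofReal (∫ t in Set.Ioi b, K * t ^ (-p)) := by
          rw [ofReal_integral_eq_lintegral_ofReal hint]
          filter_upwards [ae_restrict_mem measurableSet_Ioi] with t ht
          have : 0 < t := hb.trans ht
          simp only [Pi.zero_apply]
          positivity
      _ = _ := by
          rw [integral_const_mul, integral_Ioi_rpow_of_lt (by linarith) hb,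
            show -p + 1 = -(p - 1) by ring, neg_div_neg_eq, show -(p - 1) = 1 - p by ring]
  have hlog : 0 ≤ Real.log (b / a) := Real.log_nonneg ((one_le_div ha).2 hab)
  have hp1 : 0 < p - 1 := by linarith
  rw [ENNReal.ofReal_add (by positivity) (by positivity),
    ENNReal.ofReal_add (by positivity) (by positivity)]
  have hun : Set.Ioi (0 : ℝ) = (Set.Ioc 0 a ∪ Set.Ioc a b) ∪ Set.Ioi b := by
    rw [Set.Ioc_union_Ioc_eq_Ioc ha.le hab, Set.Ioc_union_Ioi_eq_Ioi hb.le]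
  rw [hun]
  refine (lintegral_union_le _ _ _).trans (add_le_add ?_ e3)
  exact (lintegral_union_le _ _ _).trans (add_le_add e1 e2)

/-- **Interpolation estimate.** If `Ω ⊂ ℝ^d` has finite measure, `u : Ω → [0,∞)` is
measurable, `1 < p < ∞`, `0 < |||u|||_{M^1(Ω)}` and `|||u|||_{M^p(Ω)} < ∞`, then `u ∈ L¹(Ω)` with
`∫_Ω u ≤ (p/(p-1)) |||u|||_{M^1} [1 + log(|||u|||_{M^p} L^d(Ω)^{1-1/p} / |||u|||_{M^1})]`. -/
theorem interpolation_M1_Mp (d : ℕ) (Ω : Set (EuclideanSpace ℝ (Fin d)))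
    (hΩmeas : MeasurableSet Ω) (hΩfin : volume Ω < ∞)
    (u : EuclideanSpace ℝ (Fin d) → ℝ) (hu : Measurable u) (hupos : ∀ x ∈ Ω, 0 ≤ u x)
    (p : ℝ) (hp : 1 < p)
    (hM1 : 0 < weakMp 1 Ω u) (hMp : weakMp p Ω u < ∞) :
    IntegrableOn u Ω volume ∧
      ∫ x in Ω, u x ≤ (p / (p - 1)) * (weakMp 1 Ω u).toReal *
        (1 + Real.log ((weakMp p Ω u).toReal * (volume Ω).toReal ^ (1 - 1 / p) /
          (weakMp 1 Ω u).toReal)) := by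
  have hp0 : 0 < p := by linarith
  have hp1 : 0 < p - 1 := by linarith
  have hle := weakMp_one_le hp hΩfin hMp
  have hM1fin : weakMp 1 Ω u < ∞ := hle.trans_lt ENNReal.ofReal_lt_top
  have hA : 0 < (weakMp 1 Ω u).toReal := ENNReal.toReal_pos hM1.ne' hM1fin.ne
  have hABV := ENNReal.toReal_mono ENNReal.ofReal_ne_top hle
  rw [ENNReal.toReal_ofReal (by positivity)] at hABV
  have hc1 := fun {l : ℝ} (hl : 0 < l) => rpow_mul_meas_le one_pos hM1fin hl
  have hcp := fun {l : ℝ} (hl : 0 < l) => rpow_mul_meas_le hp0 hMp hl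
  have hmV : ∀ l : ℝ, volume {x ∈ Ω | l < |u x|} ≤ volume Ω :=
    fun l => measure_mono fun x hx => hx.1
  have hmfin : ∀ l : ℝ, volume {x ∈ Ω | l < |u x|} ≠ ∞ := fun l => ((hmV l).trans_lt hΩfin).ne
  set A := (weakMp 1 Ω u).toReal
  set B := (weakMp p Ω u).toReal
  set V := (volume Ω).toReal with hVdef
  have he : 0 < 1 - 1 / p := by
    have : 1 / p < 1 := by rw [div_lt_one hp0]; exact hp
    linarith
  have hB : 0 < B := by
    refine lt_of_le_of_ne ENNReal.toReal_nonneg fun h => ?_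
    rw [← h, zero_mul] at hABV
    linarith
  have hV : 0 < V := by
    refine lt_of_le_of_ne ENNReal.toReal_nonneg fun h => ?_
    rw [← h, Real.zero_rpow he.ne', mul_zero] at hABV
    linarith
  set R := B * V ^ (1 - 1 / p) / A with hR
  have hR1 : 1 ≤ R := (one_le_div hA).2 hABV
  have hRpos : 0 < R := by linarith
  -- The cut-offs: `a` is where `V = A / l`, and `b` is where `A / l = (B / l) ^ p`.
  set a := A / V with ha_def
  have ha : 0 < a := by positivity
  set b := (B ^ p / A) ^ (1 / (p - 1)) with hb_def
  have hb : 0 < b := by positivity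
  have hlog : Real.log (b / a) = p / (p - 1) * Real.log R := by
    rw [hR, ha_def, hb_def, Real.log_div (by positivity) (by positivity),
      Real.log_rpow (by positivity), Real.log_div (by positivity) (by positivity),
      Real.log_rpow hB, Real.log_div hA.ne' hV.ne', Real.log_div (by positivity) hA.ne',
      Real.log_mul hB.ne' (by positivity), Real.log_rpow hV]
    field_simp
    ring
  have hlogR : 0 ≤ Real.log R := Real.log_nonneg hR1
  have hab : a ≤ b := by
    rw [← one_le_div ha, ← Real.log_nonneg_iff (by positivity), hlog]
    positivity
  have hbp : B ^ p * b ^ (1 - p) = A := by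
    rw [hb_def, ← Real.rpow_mul (by positivity),
      show 1 / (p - 1) * (1 - p) = -1 by field_simp; ring, Real.rpow_neg_one]
    field_simp
  have hupos' : 0 ≤ᵐ[volume.restrict Ω] u := by
    filter_upwards [ae_restrict_mem hΩmeas] with x hx using hupos x hx
  have hlayer : ∫⁻ x in Ω, ENNReal.ofReal (u x) ≤
      ENNReal.ofReal (a * V + A * Real.log (b / a) + B ^ p * (b ^ (1 - p) / (p - 1))) := by
    rw [lintegral_eq_lintegral_meas_lt _ hupos' hu.aemeasurable]
    have hm : ∀ t : ℝ, (volume.restrict Ω) {x | t < u x} ≤ volume {x ∈ Ω | t < |u x|} := by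
      intro t
      rw [Measure.restrict_apply (measurableSet_lt measurable_const hu)]
      exact measure_mono fun x hx => ⟨hx.2, lt_of_lt_of_le hx.1 (le_abs_self _)⟩
    refine lintegral_le_of_three_bounds hV.le hA.le (by positivity) hp ha hab ?_ ?_ ?_
    · intro t _
      rw [hVdef, ENNReal.ofReal_toReal hΩfin.ne]
      exact (hm t).trans (hmV t)
    · intro t ht
      refine (hm t).trans ?_
      rw [← ENNReal.ofReal_toReal (hmfin t)]
      apply ENNReal.ofReal_le_ofReal
      have := hc1 ht
      rw [Real.rpow_one, Real.rpow_one] at this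
      rw [← div_eq_mul_inv, le_div_iff₀ ht]
      linarith
    · intro t ht
      refine (hm t).trans ?_
      rw [← ENNReal.ofReal_toReal (hmfin t)]
      apply ENNReal.ofReal_le_ofReal
      have := hcp ht
      rw [Real.rpow_neg ht.le, ← div_eq_mul_inv, le_div_iff₀ (by positivity)]
      linarith
  have hval : a * V + A * Real.log (b / a) + B ^ p * (b ^ (1 - p) / (p - 1)) =
      p / (p - 1) * A * (1 + Real.log R) := by
    rw [← mul_div_assoc, hbp, hlog, ha_def]
    field_simp
    ring
  rw [hval] at hlayer
  refine ⟨⟨hu.aestronglyMeasurable, ?_⟩, ?_⟩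
  · rw [hasFiniteIntegral_iff_ofReal hupos']
    exact hlayer.trans_lt ENNReal.ofReal_lt_top
  · rw [integral_eq_lintegral_of_nonneg_ae hupos' hu.aestronglyMeasurable]
    exact ENNReal.toReal_le_of_le_ofReal (by positivity) hlayer
end

section
/- Let Ω ⊂ ℝ^d be a measurable set with L^d(Ω) < ∞ and let u : Ω → [0,∞) be measurable. Assume 0 < |||u|||_{M^1(Ω)} and that u is essentially bounded on Ω. Then u ∈ L^1(Ω) and ∫_Ω u dx ≤ |||u|||_{M^1(Ω)} · [ 1 + log( ‖u‖_{L^∞(Ω)} · L^d(Ω) / |||u|||_{M^1(Ω)} ) ]. -/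
/-!
The proof is the layer-cake formula. With `m t = L^d({x ∈ Ω : u x > t})`, one has
`∫_Ω u = ∫_0^∞ m t dt`. Write `M = |||u|||_{M¹(Ω)}`, `S = ‖u‖_{L^∞(Ω)}` and `V = L^d(Ω)`. Then
`m t ≤ V` and `m t ≤ M / t` for all `t > 0`, and `m t = 0` for `t ≥ S`. In particular `M ≤ S V`
(`weakM1_le`), so that `a = M / V` lies in `(0, S]`. Using the first bound on `(0, a]` and the second
on `(a, S]` gives `∫_Ω u ≤ a V + M log (S / a) = M (1 + log (S V / M))`; this last computation is
carried out for an arbitrary antitone function `m` in `integral_layers_le`.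
-/

open MeasureTheory ENNReal

/-- The weak-`L¹` (Marcinkiewicz) quasinorm
`|||u|||_{M¹(Ω)} = sup_{λ>0} λ · L^d({x ∈ Ω : |u x| > λ})`. -/
noncomputable def weakM1 {d : ℕ} (Ω : Set (EuclideanSpace ℝ (Fin d)))
    (u : EuclideanSpace ℝ (Fin d) → ℝ) : ℝ≥0∞ :=
  ⨆ (l : ℝ) (_ : 0 < l), ENNReal.ofReal l * volume {x ∈ Ω | l < |u x|}

/-- The level sets in `weakM1` have measure zero above the essential supremum. -/
lemma measure_level_eq_zero {d : ℕ} {Ω : Set (EuclideanSpace ℝ (Fin d))}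
    (hΩmeas : MeasurableSet Ω) {u : EuclideanSpace ℝ (Fin d) → ℝ}
    (hbdd : eLpNorm u ∞ (volume.restrict Ω) < ∞) {l : ℝ}
    (hl : (eLpNorm u ∞ (volume.restrict Ω)).toReal ≤ l) :
    volume {x ∈ Ω | l < |u x|} = 0 := by
  have h : ∀ᵐ x ∂(volume.restrict Ω), |u x| ≤ l := by
    have h1 := ae_le_eLpNormEssSup (f := u) (μ := volume.restrict Ω)
    rw [← eLpNorm_exponent_top] at h1
    filter_upwards [h1] with x hx
    have h2 := ENNReal.toReal_mono hbdd.ne hx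
    rw [toReal_enorm, Real.norm_eq_abs] at h2
    exact h2.trans hl
  rw [ae_restrict_iff' hΩmeas, ae_iff] at h
  convert h using 2
  ext x
  simp

lemma weakM1_le {d : ℕ} {Ω : Set (EuclideanSpace ℝ (Fin d))}
    (hΩmeas : MeasurableSet Ω) {u : EuclideanSpace ℝ (Fin d) → ℝ}
    (hbdd : eLpNorm u ∞ (volume.restrict Ω) < ∞) :
    weakM1 Ω u ≤ eLpNorm u ∞ (volume.restrict Ω) * volume Ω := by
  refine iSup₂_le fun l _ => ?_
  rcases le_total (eLpNorm u ∞ (volume.restrict Ω)).toReal l with h | h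
  · simp [measure_level_eq_zero hΩmeas hbdd h]
  · exact mul_le_mul' (ENNReal.ofReal_le_of_le_toReal h) (measure_mono fun x hx => hx.1)

/-- The one-variable estimate behind the theorem: an antitone distribution function `m` with
`m t ≤ V`, `m t ≤ M / t` and `m t = 0` beyond `S` has integral at most `M (1 + log (S V / M))`. -/
lemma integral_layers_le {m : ℝ → ℝ} (hm : Antitone m) {M S V : ℝ} (hM : 0 < M) (hV : 0 < V)
    (hMSV : M ≤ S * V) (h1 : ∀ t, m t ≤ V) (h2 : ∀ t, 0 < t → t * m t ≤ M)
    (h3 : ∀ t, S < t → m t = 0) :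
    ∫ t in Set.Ioi 0, m t ≤ M * (1 + Real.log (S * V / M)) := by
  have ha : 0 < M / V := by positivity
  have haS : M / V ≤ S := by rwa [div_le_iff₀ hV]
  have hS : 0 < S := ha.trans_le haS
  have hint : ∀ x y : ℝ, IntervalIntegrable m volume x y := fun x y =>
    (hm.antitoneOn _).intervalIntegrable
  have e1 : ∫ t in Set.Ioi 0, m t = ∫ t in (0 : ℝ)..S, m t := by
    rw [intervalIntegral.integral_of_le hS.le]
    refine (setIntegral_eq_of_subset_of_forall_sdiff_eq_zero measurableSet_Ioi
      Set.Ioc_subset_Ioi_self fun t ht => h3 t ?_)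
    by_contra hc
    exact ht.2 ⟨ht.1, not_lt.1 hc⟩
  have b1 : ∫ t in (0 : ℝ)..(M / V), m t ≤ M := by
    calc ∫ t in (0 : ℝ)..(M / V), m t ≤ ∫ _ in (0 : ℝ)..(M / V), V :=
          intervalIntegral.integral_mono_on ha.le (hint _ _) (by simp) fun t _ => h1 t
      _ = M := by
          rw [intervalIntegral.integral_const, smul_eq_mul]
          field_simp
          ring
  have h0 : (0 : ℝ) ∉ Set.uIcc (M / V) S := by
    rw [Set.uIcc_of_le haS]
    exact fun h => absurd h.1 (not_le.2 ha)
  have b2 : ∫ t in (M / V)..S, m t ≤ M * Real.log (S * V / M) := by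
    calc ∫ t in (M / V)..S, m t ≤ ∫ t in (M / V)..S, M * t⁻¹ := by
          refine intervalIntegral.integral_mono_on haS (hint _ _) ?_ fun t ht => ?_
          · refine (intervalIntegral.intervalIntegrable_inv (f := fun t => t) ?_
              continuousOn_id).const_mul M
            rintro t ht rfl
            exact h0 ht
          · have htp : 0 < t := ha.trans_le ht.1
            rw [← div_eq_mul_inv, le_div_iff₀ htp, mul_comm]
            exact h2 t htp
      _ = M * Real.log (S * V / M) := by
          rw [intervalIntegral.integral_const_mul, integral_inv h0, div_div_eq_mul_div]
  rw [e1, ← intervalIntegral.integral_add_adjacent_intervals (hint 0 (M / V)) (hint (M / V) S)]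
  linarith

/-- **Interpolation estimate, `p = ∞` case.** If `Ω ⊂ ℝ^d` has finite measure, `u : Ω → [0,∞)`
is measurable, `0 < |||u|||_{M¹(Ω)}` and `u` is essentially bounded on `Ω`, then `u ∈ L¹(Ω)` with
`∫_Ω u ≤ |||u|||_{M¹} [1 + log(‖u‖_{L^∞(Ω)} L^d(Ω) / |||u|||_{M¹})]`. -/
theorem interpolation_M1_Linfty (d : ℕ) (Ω : Set (EuclideanSpace ℝ (Fin d)))
    (hΩmeas : MeasurableSet Ω) (hΩfin : volume Ω < ∞)
    (u : EuclideanSpace ℝ (Fin d) → ℝ) (hu : Measurable u) (hupos : ∀ x ∈ Ω, 0 ≤ u x)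
    (hM1 : 0 < weakM1 Ω u)
    (hbdd : eLpNorm u ∞ (volume.restrict Ω) < ∞) :
    IntegrableOn u Ω volume ∧
      ∫ x in Ω, u x ≤ (weakM1 Ω u).toReal *
        (1 + Real.log ((eLpNorm u ∞ (volume.restrict Ω)).toReal * (volume Ω).toReal /
          (weakM1 Ω u).toReal)) := by
  have hle := weakM1_le hΩmeas hbdd
  have hfin : eLpNorm u ∞ (volume.restrict Ω) * volume Ω < ∞ := ENNReal.mul_lt_top hbdd hΩfin
  have hMfin : weakM1 Ω u < ∞ := hle.trans_lt hfin
  have hMpos : 0 < (weakM1 Ω u).toReal := ENNReal.toReal_pos hM1.ne' hMfin.ne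
  have hMSV : (weakM1 Ω u).toReal ≤
      (eLpNorm u ∞ (volume.restrict Ω)).toReal * (volume Ω).toReal := by
    rw [← ENNReal.toReal_mul]
    exact ENNReal.toReal_mono hfin.ne hle
  have hV : 0 < (volume Ω).toReal :=
    ENNReal.toReal_nonneg.lt_of_ne fun h => by
      rw [← h, mul_zero] at hMSV
      exact absurd hMSV (not_le.2 hMpos)
  have : IsFiniteMeasure (volume.restrict Ω) := ⟨by simpa using hΩfin⟩
  have hint : Integrable u (volume.restrict Ω) :=
    MemLp.integrable le_top (⟨hu.aestronglyMeasurable, hbdd⟩ : MemLp u ∞ (volume.restrict Ω))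
  have hpos : 0 ≤ᵐ[volume.restrict Ω] u := (ae_restrict_iff' hΩmeas).2 (ae_of_all _ hupos)
  refine ⟨hint, ?_⟩
  have hlevel : ∀ t : ℝ, (volume.restrict Ω) {x | t < u x} ≤ volume {x ∈ Ω | t < |u x|} := by
    intro t
    rw [Measure.restrict_apply (measurableSet_lt measurable_const hu)]
    exact measure_mono fun x hx => ⟨hx.2, lt_of_lt_of_le hx.1 (le_abs_self _)⟩
  rw [hint.integral_eq_integral_meas_lt hpos]
  refine integral_layers_le ?_ hMpos hV hMSV ?_ ?_ ?_
  · exact fun s t hst => measureReal_mono fun x hx => lt_of_le_of_lt hst hx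
  · intro t
    refine ENNReal.toReal_mono hΩfin.ne ((measure_mono (Set.subset_univ _)).trans ?_)
    simp
  · intro t ht
    have h : ENNReal.ofReal t * (volume.restrict Ω) {x | t < u x} ≤ weakM1 Ω u :=
      (mul_le_mul' le_rfl (hlevel t)).trans
        (le_iSup₂_of_le (f := fun (l : ℝ) (_ : 0 < l) =>
          ENNReal.ofReal l * volume {x ∈ Ω | l < |u x|}) t ht le_rfl)
    have h' := ENNReal.toReal_mono hMfin.ne h
    rwa [ENNReal.toReal_mul, ENNReal.toReal_ofReal ht.le] at h'
  · intro t ht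
    have h := hlevel t
    rw [measure_level_eq_zero hΩmeas hbdd ht.le] at h
    simp [Measure.real, nonpos_iff_eq_zero.1 h]
end

section
/- There exists a constant C_d, depending only on the dimension d, with the following property: for every Lipschitz function f : ℝ^d → ℝ there exists a Lebesgue-negligible set N ⊂ ℝ^d such that for all x, y ∈ ℝ^d ∖ N one has |f(x) − f(y)| ≤ C_d |x − y| ( Mg(x) + Mg(y) ), where g(x) = ‖Df(x)‖ is the norm of the (almost everywhere defined, by Rademacher's theorem) derivative of f, extended by 0 on the null set where f is not differentiable. -/
/-!
The bound holds for every pair of points, with `C = 2 ^ d` and an empty exceptional set.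

Fix `x` and `r > 0`. By Rademacher's theorem and Fubini, for almost every `z` the function `f` is
differentiable at almost every point of the segment from `x` to `z`, so the fundamental theorem of
calculus for the Lipschitz function `t ↦ f (x + t (z - x))` gives
`|f z - f x| ≤ |z - x| ∫₀¹ g (x + t (z - x)) dt`
(`ae_enorm_sub_le_lintegral_segment`). Integrating over `z ∈ B_r(x)`, swapping the integrals and
rescaling the inner one to `B_{tr}(x)` (`lintegral_ball_homothety_le`) yields
`∫_{B_r(x)} |f z - f x| dz ≤ r |B_r(x)| Mg(x)` (`lintegral_ball_enorm_sub_le`).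

For `x ≠ y` and `r = |x - y|`, the ball `W` of radius `r / 2` around the midpoint of `x` and `y` lies
in both `B_r(x)` and `B_r(y)`. Integrating `|f x - f y| ≤ |f z - f x| + |f z - f y|` over `z ∈ W`
and dividing by `|W| = 2 ^ (-d) |B_r|` concludes.
-/


open MeasureTheory ENNReal

/-- The Hardy–Littlewood maximal function
`Mu(x) = sup_{ε>0} (1/L^d(B_ε(x))) ∫_{B_ε(x)} |u(y)| dy`, with values in `[0,∞]`. -/
noncomputable def hlMax {d : ℕ} (u : EuclideanSpace ℝ (Fin d) → ℝ)
    (x : EuclideanSpace ℝ (Fin d)) : ℝ≥0∞ :=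
  ⨆ (ε : ℝ) (_ : 0 < ε),
    (∫⁻ y in Metric.ball x ε, ‖u y‖₊) / volume (Metric.ball x ε)

section Homothety

variable {E : Type*} [NormedAddCommGroup E] [NormedSpace ℝ E] [FiniteDimensional ℝ E]
  [MeasurableSpace E] [BorelSpace E] (μ : Measure E) [μ.IsAddHaarMeasure]

theorem lintegral_comp_homothety (x : E) {t : ℝ} (ht : 0 < t) {h : E → ℝ≥0∞}
    (hh : Measurable h) :
    ∫⁻ z, h (x + t • (z - x)) ∂μ
      = ENNReal.ofReal ((t ^ Module.finrank ℝ E)⁻¹) * ∫⁻ z, h z ∂μ := by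
  have h1 : ∀ z, x + t • (z - x) = (x - t • x) + t • z := fun z => by
    rw [smul_sub]; abel
  have h2 : ∫⁻ z, h ((x - t • x) + t • z) ∂μ
      = ∫⁻ w, h ((x - t • x) + w) ∂(Measure.map (t • ·) μ) := by
    rw [lintegral_map (by fun_prop) (by fun_prop)]
  simp_rw [h1]
  rw [h2, Measure.map_addHaar_smul μ ht.ne', lintegral_smul_measure,
    lintegral_add_left_eq_self, abs_of_pos (by positivity), smul_eq_mul]

/-- A null set has null preimage under a homothety of positive ratio. -/
theorem ae_comp_homothety (x : E) {t : ℝ} (ht : 0 < t) {p : E → Prop}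
    (hp : MeasurableSet {z | p z}) (h : ∀ᵐ z ∂μ, p z) : ∀ᵐ z ∂μ, p (x + t • (z - x)) := by
  have hm : Measurable fun z : E => x + t • (z - x) := by fun_prop
  have h0 := lintegral_comp_homothety μ x ht (h := {z | p z}ᶜ.indicator 1)
    (measurable_one.indicator hp.compl)
  rw [lintegral_indicator_one hp.compl, show μ {z | p z}ᶜ = 0 from h, mul_zero] at h0
  have h1 : ∀ z, ({z | p z}ᶜ.indicator 1 (x + t • (z - x)) : ℝ≥0∞)
      = ((fun z : E => x + t • (z - x)) ⁻¹' {z | p z}ᶜ).indicator 1 z := fun z => rfl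
  simp_rw [h1] at h0
  rw [lintegral_indicator_one (hm hp.compl)] at h0
  exact h0

variable {f : E → ℝ} {K : NNReal}

theorem ae_enorm_sub_le_lintegral_segment (hf : LipschitzWith K f) (x : E) :
    ∀ᵐ z ∂μ, ‖f z - f x‖ₑ
      ≤ ‖z - x‖ₑ * ∫⁻ t in Set.Ioc (0 : ℝ) 1, ‖fderiv ℝ f (x + t • (z - x))‖ₑ := by
  have hD : MeasurableSet {z | DifferentiableAt ℝ f z} := measurableSet_of_differentiableAt ℝ f
  have hae : ∀ᵐ z ∂μ, ∀ᵐ t ∂(volume.restrict (Set.Ioc (0 : ℝ) 1)),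
      DifferentiableAt ℝ f (x + t • (z - x)) := by
    rw [Measure.ae_ae_comm]
    · filter_upwards [ae_restrict_mem measurableSet_Ioc] with t ht
      exact ae_comp_homothety μ x ht.1 hD hf.ae_differentiableAt
    · have : Measurable fun q : E × ℝ => x + q.2 • (q.1 - x) := by fun_prop
      exact this hD
  filter_upwards [hae] with z hz
  have hlip : LipschitzWith (K * ‖z - x‖₊) fun t : ℝ => f (x + t • (z - x)) := by
    refine hf.comp (LipschitzWith.of_dist_le_mul fun s t => ?_)
    rw [dist_add_left, dist_eq_norm, ← sub_smul, norm_smul, Real.dist_eq, Real.norm_eq_abs,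
      mul_comm, coe_nnnorm]
  have hftc := ((hlip.lipschitzOnWith
    (s := Set.uIcc (0 : ℝ) 1)).absolutelyContinuousOnInterval).integral_deriv_eq_sub
  simp only [one_smul, add_sub_cancel, zero_smul, add_zero] at hftc
  rw [← hftc, intervalIntegral.integral_of_le zero_le_one]
  refine (enorm_integral_le_lintegral_enorm _).trans ?_
  rw [← lintegral_const_mul' _ _ enorm_ne_top]
  refine lintegral_mono_ae ?_
  filter_upwards [hz] with t ht
  have hγ : HasDerivAt (fun t : ℝ => x + t • (z - x)) (z - x) t := by
    simpa using ((hasDerivAt_id t).smul_const (z - x)).const_add x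
  have hd : deriv (fun t : ℝ => f (x + t • (z - x))) t = fderiv ℝ f (x + t • (z - x)) (z - x) :=
    (ht.hasFDerivAt.comp_hasDerivAt t hγ).deriv
  rw [hd, mul_comm]
  exact ContinuousLinearMap.le_opENorm _ _

end Homothety

section Maximal

variable {d : ℕ}

theorem lintegral_ball_le_hlMax (u : EuclideanSpace ℝ (Fin d) → ℝ)
    (x : EuclideanSpace ℝ (Fin d)) {r : ℝ} (hr : 0 < r) :
    ∫⁻ y in Metric.ball x r, ‖u y‖ₑ ≤ hlMax u x * volume (Metric.ball x r) := by
  have h : (∫⁻ y in Metric.ball x r, ‖u y‖ₑ) / volume (Metric.ball x r) ≤ hlMax u x :=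
    le_iSup₂ (f := fun (ε : ℝ) (_ : 0 < ε) =>
      (∫⁻ y in Metric.ball x ε, (‖u y‖₊ : ℝ≥0∞)) / volume (Metric.ball x ε)) r hr
  rwa [ENNReal.div_le_iff (Metric.measure_ball_pos _ _ hr).ne' measure_ball_lt_top.ne] at h

/-- The average of `|u|` over `B_{tr}(x)` is at most `Mu(x)`, pulled back to `B_r(x)` by the
homothety of ratio `t` centred at `x`. -/
theorem lintegral_ball_homothety_le {u : EuclideanSpace ℝ (Fin d) → ℝ} (hu : Measurable u)
    (x : EuclideanSpace ℝ (Fin d)) {r t : ℝ} (hr : 0 < r) (ht : 0 < t) :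
    ∫⁻ z in Metric.ball x r, ‖u (x + t • (z - x))‖ₑ
      ≤ hlMax u x * volume (Metric.ball x r) := by
  have h1 : ∀ z, (Metric.ball x r).indicator (fun z => ‖u (x + t • (z - x))‖ₑ) z
      = (Metric.ball x (t * r)).indicator (fun w => ‖u w‖ₑ) (x + t • (z - x)) := by
    intro z
    have : z ∈ Metric.ball x r ↔ x + t • (z - x) ∈ Metric.ball x (t * r) := by
      rw [mem_ball_iff_norm, mem_ball_iff_norm, add_sub_cancel_left, norm_smul,
        Real.norm_of_nonneg ht.le, mul_lt_mul_iff_right₀ ht]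
    by_cases hz : z ∈ Metric.ball x r
    · rw [Set.indicator_of_mem hz, Set.indicator_of_mem (this.1 hz)]
    · rw [Set.indicator_of_notMem hz, Set.indicator_of_notMem (mt this.2 hz)]
  rw [← lintegral_indicator measurableSet_ball]
  simp_rw [h1]
  rw [lintegral_comp_homothety volume x ht (hu.enorm.indicator measurableSet_ball),
    lintegral_indicator measurableSet_ball]
  calc _ ≤ ENNReal.ofReal ((t ^ Module.finrank ℝ (EuclideanSpace ℝ (Fin d)))⁻¹) *
        (hlMax u x * volume (Metric.ball x (t * r))) := by
        gcongr
        exact lintegral_ball_le_hlMax u x (mul_pos ht hr)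
    _ = _ := by
        rw [Measure.addHaar_ball_mul_of_pos volume x ht, Measure.addHaar_ball_center volume x r,
          mul_left_comm, ← mul_assoc (ENNReal.ofReal _) (ENNReal.ofReal _),
          ← ENNReal.ofReal_mul (by positivity), inv_mul_cancel₀ (by positivity),
          ENNReal.ofReal_one, one_mul]

/-- The mean oscillation of `f` around `f x` on `B_r(x)` is at most `r · M‖Df‖(x)`; this holds at
every point `x`. -/
theorem lintegral_ball_enorm_sub_le {f : EuclideanSpace ℝ (Fin d) → ℝ} {K : NNReal}
    (hf : LipschitzWith K f) (x : EuclideanSpace ℝ (Fin d)) {r : ℝ} (hr : 0 < r) :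
    ∫⁻ z in Metric.ball x r, ‖f z - f x‖ₑ
      ≤ ENNReal.ofReal r *
        (hlMax (fun z => ‖fderiv ℝ f z‖) x * volume (Metric.ball x r)) := by
  have hg : Measurable fun z => ‖fderiv ℝ f z‖ := (measurable_fderiv ℝ f).norm
  have hq : Measurable fun q : EuclideanSpace ℝ (Fin d) × ℝ => x + q.2 • (q.1 - x) := by
    fun_prop
  calc ∫⁻ z in Metric.ball x r, ‖f z - f x‖ₑ
      ≤ ∫⁻ z in Metric.ball x r, ENNReal.ofReal r *
          ∫⁻ t in Set.Ioc (0 : ℝ) 1, ‖‖fderiv ℝ f (x + t • (z - x))‖‖ₑ := by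
        refine lintegral_mono_ae ?_
        filter_upwards [ae_restrict_of_ae (ae_enorm_sub_le_lintegral_segment volume hf x),
          ae_restrict_mem measurableSet_ball] with z hz hzr
        refine hz.trans ?_
        simp_rw [enorm_norm]
        gcongr
        rw [← ofReal_norm]
        exact ENNReal.ofReal_le_ofReal (mem_ball_iff_norm.1 hzr).le
    _ = ENNReal.ofReal r * ∫⁻ t in Set.Ioc (0 : ℝ) 1, ∫⁻ z in Metric.ball x r,
          ‖‖fderiv ℝ f (x + t • (z - x))‖‖ₑ := by
        rw [lintegral_const_mul' _ _ ENNReal.ofReal_ne_top, lintegral_lintegral_swap]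
        exact (hg.comp hq).enorm.aemeasurable
    _ ≤ ENNReal.ofReal r * ∫⁻ t in Set.Ioc (0 : ℝ) 1,
          hlMax (fun z => ‖fderiv ℝ f z‖) x * volume (Metric.ball x r) := by
        gcongr ENNReal.ofReal r * ?_
        refine lintegral_mono_ae ?_
        filter_upwards [ae_restrict_mem measurableSet_Ioc] with t ht
        exact lintegral_ball_homothety_le hg x hr ht.1
    _ = _ := by simp

end Maximal

/-- **Difference quotients of a Lipschitz function are controlled by the maximal function of
its gradient.** There is a constant `C_d` depending only on `d` such that for every Lipschitz
`f : ℝ^d → ℝ` there is a Lebesgue-negligible set `N` with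
`|f x − f y| ≤ C_d |x − y| (Mg(x) + Mg(y))` for all `x, y ∉ N`, where `g = ‖Df‖`
(the derivative exists a.e. by Rademacher's theorem, and `fderiv` is `0` where `f` is not
differentiable). -/
theorem lipschitz_diff_quotient_maximal (d : ℕ) :
    ∃ C : ℝ, 0 < C ∧
      ∀ (f : EuclideanSpace ℝ (Fin d) → ℝ) (K : NNReal), LipschitzWith K f →
        ∃ N : Set (EuclideanSpace ℝ (Fin d)), volume N = 0 ∧
          ∀ x ∉ N, ∀ y ∉ N,
            ENNReal.ofReal |f x - f y| ≤ ENNReal.ofReal (C * ‖x - y‖) *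
              (hlMax (fun z => ‖fderiv ℝ f z‖) x + hlMax (fun z => ‖fderiv ℝ f z‖) y) := by
  refine ⟨2 ^ d, by positivity, fun f K hf => ⟨∅, measure_empty, fun x _ y _ => ?_⟩⟩
  rcases eq_or_ne x y with rfl | hxy
  · simp
  set g := fun z => ‖fderiv ℝ f z‖
  set r := ‖x - y‖ with hr_def
  have hr : 0 < r := norm_sub_pos_iff.2 hxy
  set W := Metric.ball (midpoint ℝ x y) (2⁻¹ * r)
  have hWx : W ⊆ Metric.ball x r := by
    refine Metric.ball_subset_ball' ?_
    rw [dist_midpoint_left, dist_eq_norm, ← hr_def, Real.norm_of_nonneg zero_le_two]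
    linarith
  have hWy : W ⊆ Metric.ball y r := by
    refine Metric.ball_subset_ball' ?_
    rw [dist_midpoint_right, dist_eq_norm, ← hr_def, Real.norm_of_nonneg zero_le_two]
    linarith
  set V := volume (Metric.ball (0 : EuclideanSpace ℝ (Fin d)) r)
  have hV0 : V ≠ 0 := (Metric.measure_ball_pos _ _ hr).ne'
  have hVtop : V ≠ ∞ := measure_ball_lt_top.ne
  have hW : volume W = ENNReal.ofReal (2⁻¹ ^ d) * V := by
    simpa using Measure.addHaar_ball_mul_of_pos volume (midpoint ℝ x y)
      (show (0 : ℝ) < 2⁻¹ by norm_num) r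
  have hx := lintegral_ball_enorm_sub_le hf x hr
  have hy := lintegral_ball_enorm_sub_le hf y hr
  rw [Measure.addHaar_ball_center volume] at hx hy
  have key : ‖f x - f y‖ₑ * volume W ≤ ENNReal.ofReal r * (hlMax g x + hlMax g y) * V := by
    calc ‖f x - f y‖ₑ * volume W = ∫⁻ _ in W, ‖f x - f y‖ₑ := by simp
      _ ≤ ∫⁻ z in W, (‖f z - f x‖ₑ + ‖f z - f y‖ₑ) := by
          refine lintegral_mono fun z => ?_
          rw [← enorm_neg (f z - f x)]
          refine le_trans (le_of_eq ?_) (enorm_add_le _ _)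
          congr 1
          ring
      _ = (∫⁻ z in W, ‖f z - f x‖ₑ) + ∫⁻ z in W, ‖f z - f y‖ₑ :=
          lintegral_add_left (hf.continuous.measurable.sub_const _).enorm _
      _ ≤ (∫⁻ z in Metric.ball x r, ‖f z - f x‖ₑ) + ∫⁻ z in Metric.ball y r, ‖f z - f y‖ₑ :=
          add_le_add (lintegral_mono_set hWx) (lintegral_mono_set hWy)
      _ ≤ _ := (add_le_add hx hy).trans (le_of_eq (by ring))
  rw [hW, ← mul_assoc, ENNReal.mul_le_mul_iff_left hV0 hVtop] at key
  rw [← Real.norm_eq_abs, ofReal_norm]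
  calc ‖f x - f y‖ₑ
      = ENNReal.ofReal (2 ^ d) * (‖f x - f y‖ₑ * ENNReal.ofReal (2⁻¹ ^ d)) := by
        rw [mul_left_comm, ← ENNReal.ofReal_mul (by positivity), ← mul_pow,
          mul_inv_cancel₀ two_ne_zero, one_pow, ENNReal.ofReal_one, mul_one]
    _ ≤ ENNReal.ofReal (2 ^ d) * (ENNReal.ofReal r * (hlMax g x + hlMax g y)) := by gcongr
    _ = _ := by rw [← mul_assoc, ← ENNReal.ofReal_mul (by positivity)]
end

section
/- Write ℝ^N = ℝ^{n₁} × ℝ^{n₂} with variables x = (x₁,x₂), and let 0 < δ₁ ≤ δ₂. There exists a constant C_N, depending only on N, with the following property: for every Lipschitz function f : ℝ^N → ℝ there exists a Lebesgue-negligible set 𝒩 ⊂ ℝ^N such that for all x, y ∈ ℝ^N ∖ 𝒩 one has |f(x) − f(y)| ≤ C_N |A^{-1}(x − y)| ( U(x) + U(y) ), where U(x) = δ₁ · M_A g₁(x) + δ₂ · M_A g₂(x), g₁(x) = |∇_{x₁} f(x)| and g₂(x) = |∇_{x₂} f(x)| are the Euclidean norms of the (almost everywhere defined, by Rademacher's theorem)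 partial gradients of f with respect to the x₁- and x₂-variables, extended by 0 where f is not differentiable. -/
/-! Let `r = |A⁻¹(x - y)|` and let `W` be the anisotropic ball of radius `r / 2` centred at the
midpoint of `x` and `y`, so that `W ⊆ E_r(x) ∩ E_r(y)`. Both `f x` and `f y` are compared with the
average of `f` over `W`. For the comparison with `f x`, consider the function
`φ t = ∫_W f (x + t (z - x)) dz`. For each fixed `t > 0` the map `z ↦ x + t (z - x)` is
nonsingular, so by Rademacher's theorem `f` is differentiable at `x + t (z - x)` for almost every
`z`. Dominated convergence then shows that `φ` is differentiable at *every* `t > 0`, with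
`φ' t = ∫_W Df(x + t (z - x)) (z - x) dz`. Since `|(z - x)ᵢ| ≤ δᵢ r` on `W`, the change of variables
`w = x + t (z - x)`, which carries `E_r(x)` to `E_{tr}(x)`, gives `|φ' t| ≤ r |E_r(x)| U(x)`,
uniformly in `t`. The mean value theorem on `[0, 1]` bounds `φ 1 - φ 0 = ∫_W f - |W| f x`
(`avg_sub_le`), and dividing by `|W| = 2^{-N} |E_r(x)|` yields the estimate with `C = 2^N`. No
exceptional set is needed. -/

open MeasureTheory ENNReal

/-- The product space `ℝ^N = ℝ^{n₁} × ℝ^{n₂}`. -/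
abbrev SplitSpace (n₁ n₂ : ℕ) := EuclideanSpace ℝ (Fin n₁) × EuclideanSpace ℝ (Fin n₂)

/-- `|A⁻¹ v|` for the anisotropic dilation `A(x₁,x₂) = (δ₁x₁, δ₂x₂)`: the Euclidean norm
`√(‖v₁/δ₁‖² + ‖v₂/δ₂‖²)`. -/
noncomputable def invANorm {n₁ n₂ : ℕ} (δ₁ δ₂ : ℝ) (v : SplitSpace n₁ n₂) : ℝ :=
  Real.sqrt ((‖v.1‖ / δ₁) ^ 2 + (‖v.2‖ / δ₂) ^ 2)

/-- The anisotropic ball `E_ε(x) = {y : |A⁻¹(y − x)| < ε}`. -/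
def aBall {n₁ n₂ : ℕ} (δ₁ δ₂ : ℝ) (x : SplitSpace n₁ n₂) (ε : ℝ) : Set (SplitSpace n₁ n₂) :=
  {y | invANorm δ₁ δ₂ (y - x) < ε}

/-- The anisotropic maximal function
`M_A u(x) = sup_{ε>0} (1/L^N(E_ε(x))) ∫_{E_ε(x)} |u(y)| dy`, with values in `[0,∞]`. -/
noncomputable def maxA {n₁ n₂ : ℕ} (δ₁ δ₂ : ℝ) (u : SplitSpace n₁ n₂ → ℝ)
    (x : SplitSpace n₁ n₂) : ℝ≥0∞ :=
  ⨆ (ε : ℝ) (_ : 0 < ε),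
    (∫⁻ y in aBall δ₁ δ₂ x ε, ‖u y‖₊) / volume (aBall δ₁ δ₂ x ε)

section Geometry

variable {n₁ n₂ : ℕ} {δ₁ δ₂ : ℝ}

/-- `invANorm` is the `ℓ²`-product norm of the rescaled vector. -/
lemma invANorm_eq_norm (h1 : 0 < δ₁) (h2 : 0 < δ₂) (v : SplitSpace n₁ n₂) :
    invANorm δ₁ δ₂ v = ‖WithLp.toLp 2 (δ₁⁻¹ • v.1, δ₂⁻¹ • v.2)‖ := by
  rw [WithLp.prod_norm_eq_of_L2, invANorm]
  simp [norm_smul, abs_of_pos h1, abs_of_pos h2, div_eq_inv_mul]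

lemma invANorm_add_le (h1 : 0 < δ₁) (h2 : 0 < δ₂) (v w : SplitSpace n₁ n₂) :
    invANorm δ₁ δ₂ (v + w) ≤ invANorm δ₁ δ₂ v + invANorm δ₁ δ₂ w := by
  rw [invANorm_eq_norm h1 h2, invANorm_eq_norm h1 h2, invANorm_eq_norm h1 h2]
  refine le_trans (le_of_eq ?_) (norm_add_le _ _)
  rw [← WithLp.toLp_add]
  simp

lemma invANorm_smul (t : ℝ) (v : SplitSpace n₁ n₂) :
    invANorm δ₁ δ₂ (t • v) = |t| * invANorm δ₁ δ₂ v := by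
  unfold invANorm
  rw [← Real.sqrt_sq_eq_abs, ← Real.sqrt_mul (sq_nonneg t)]
  congr 1
  simp only [Prod.smul_fst, Prod.smul_snd, norm_smul, Real.norm_eq_abs, div_pow, mul_pow, sq_abs]
  ring

lemma norm_fst_le_invANorm (h1 : 0 < δ₁) (v : SplitSpace n₁ n₂) : ‖v.1‖ ≤ δ₁ * invANorm δ₁ δ₂ v := by
  rw [mul_comm, ← div_le_iff₀ h1]
  exact Real.le_sqrt_of_sq_le (le_add_of_nonneg_right (sq_nonneg _))

lemma norm_snd_le_invANorm (h2 : 0 < δ₂) (v : SplitSpace n₁ n₂) : ‖v.2‖ ≤ δ₂ * invANorm δ₁ δ₂ v := by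
  rw [mul_comm, ← div_le_iff₀ h2]
  exact Real.le_sqrt_of_sq_le (le_add_of_nonneg_left (sq_nonneg _))

lemma invANorm_pos (h1 : 0 < δ₁) (h2 : 0 < δ₂) {v : SplitSpace n₁ n₂} (hv : v ≠ 0) :
    0 < invANorm δ₁ δ₂ v := by
  by_contra! h
  apply hv
  have a := (norm_fst_le_invANorm (δ₂ := δ₂) h1 v).trans (mul_nonpos_of_nonneg_of_nonpos h1.le h)
  have b := (norm_snd_le_invANorm (δ₁ := δ₁) h2 v).trans (mul_nonpos_of_nonneg_of_nonpos h2.le h)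
  exact Prod.ext (norm_le_zero_iff.1 a) (norm_le_zero_iff.1 b)

lemma isOpen_aBall (x : SplitSpace n₁ n₂) (ε : ℝ) : IsOpen (aBall δ₁ δ₂ x ε) := by
  apply isOpen_lt _ continuous_const
  unfold invANorm
  fun_prop

lemma norm_sub_le_of_mem_aBall (h1 : 0 < δ₁) (h2 : 0 < δ₂) {x z : SplitSpace n₁ n₂} {ε : ℝ}
    (hz : z ∈ aBall δ₁ δ₂ x ε) : ‖z - x‖ ≤ (δ₁ + δ₂) * ε := by
  have hz' : invANorm δ₁ δ₂ (z - x) < ε := hz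
  have h0 : 0 ≤ invANorm δ₁ δ₂ (z - x) := Real.sqrt_nonneg _
  refine max_le ((norm_fst_le_invANorm (δ₂ := δ₂) h1 _).trans ?_)
    ((norm_snd_le_invANorm (δ₁ := δ₁) h2 _).trans ?_) <;> gcongr <;> linarith

lemma volume_aBall_ne_top (h1 : 0 < δ₁) (h2 : 0 < δ₂) (x : SplitSpace n₁ n₂) (ε : ℝ) :
    volume (aBall δ₁ δ₂ x ε) ≠ ∞ := by
  refine ((measure_mono ?_).trans_lt
    (measure_closedBall_lt_top (x := x) (r := (δ₁ + δ₂) * ε))).ne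
  intro z hz
  rw [mem_closedBall_iff_norm]
  exact norm_sub_le_of_mem_aBall h1 h2 hz

lemma volume_aBall_ne_zero (x : SplitSpace n₁ n₂) {ε : ℝ} (hε : 0 < ε) :
    volume (aBall δ₁ δ₂ x ε) ≠ 0 := by
  refine ((isOpen_aBall x ε).measure_pos volume ⟨x, ?_⟩).ne'
  simpa [aBall, invANorm] using hε

instance (n₁ n₂ : ℕ) : (volume : Measure (SplitSpace n₁ n₂)).IsAddHaarMeasure :=
  inferInstanceAs (Measure.prod volume volume).IsAddHaarMeasure

/-- Pushing Lebesgue measure forward along `z ↦ b + t (z - a)` multiplies it by `t ^ (-N)`. -/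
lemma map_homothety (a b : SplitSpace n₁ n₂) {t : ℝ} (ht : 0 < t) :
    Measure.map (fun z => b + t • (z - a)) (volume : Measure (SplitSpace n₁ n₂)) =
      ENNReal.ofReal ((t ^ (n₁ + n₂))⁻¹) • volume := by
  have e : (fun z : SplitSpace n₁ n₂ => b + t • (z - a)) =
      (fun z => (b - t • a) + z) ∘ (fun z => t • z) := by
    ext1 z
    simp only [Function.comp, smul_sub]
    abel
  rw [e, ← Measure.map_map (by fun_prop) (by fun_prop), Measure.map_addHaar_smul _ ht.ne',
    Measure.map_smul, map_add_left_eq_self]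
  simp [abs_of_pos ht]

lemma preimage_aBall (a b : SplitSpace n₁ n₂) {t : ℝ} (ht : 0 < t) (s : ℝ) :
    (fun z => b + t • (z - a)) ⁻¹' aBall δ₁ δ₂ b (t * s) = aBall δ₁ δ₂ a s := by
  ext z
  simp only [aBall, Set.mem_preimage, Set.mem_ofPred_eq, add_sub_cancel_left, invANorm_smul,
    abs_of_pos ht]
  exact mul_lt_mul_iff_right₀ ht

lemma volume_aBall_scale (a b : SplitSpace n₁ n₂) {t : ℝ} (ht : 0 < t) (s : ℝ) :
    volume (aBall δ₁ δ₂ a s) =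
      ENNReal.ofReal ((t ^ (n₁ + n₂))⁻¹) * volume (aBall δ₁ δ₂ b (t * s)) := by
  rw [← preimage_aBall a b ht s,
    ← Measure.map_apply (by fun_prop) (isOpen_aBall b (t * s)).measurableSet,
    map_homothety a b ht]
  rfl

/-- The integral over `E_s(a)` of `g` rescaled towards `a` is, up to a change of variables, an
average of `g` over `E_{ts}(a)`, and so is controlled by the maximal function at the centre. -/
lemma lintegral_rescale_le (h1 : 0 < δ₁) (h2 : 0 < δ₂) {g : SplitSpace n₁ n₂ → ℝ}
    (hg : Measurable g) (a : SplitSpace n₁ n₂) {t s : ℝ} (ht : 0 < t) (hs : 0 < s) :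
    ∫⁻ z in aBall δ₁ δ₂ a s, ‖g (a + t • (z - a))‖₊ ≤
      volume (aBall δ₁ δ₂ a s) * maxA δ₁ δ₂ g a := by
  have hts : 0 < t * s := mul_pos ht hs
  have key : ∫⁻ y in aBall δ₁ δ₂ a (t * s), ‖g y‖₊ ≤
      volume (aBall δ₁ δ₂ a (t * s)) * maxA δ₁ δ₂ g a := by
    rw [mul_comm (volume _), ← ENNReal.div_le_iff (volume_aBall_ne_zero a hts)
      (volume_aBall_ne_top h1 h2 a _)]
    exact le_iSup₂_of_le (t * s) hts le_rfl
  have cov : ∫⁻ z in aBall δ₁ δ₂ a s, (‖g (a + t • (z - a))‖₊ : ℝ≥0∞) =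
      ENNReal.ofReal ((t ^ (n₁ + n₂))⁻¹) * ∫⁻ y in aBall δ₁ δ₂ a (t * s), ‖g y‖₊ := by
    rw [← preimage_aBall a a ht s,
      ← setLIntegral_map (f := fun y => (‖g y‖₊ : ℝ≥0∞)) (g := fun z => a + t • (z - a))
        (isOpen_aBall a (t * s)).measurableSet (by fun_prop) (by fun_prop),
      map_homothety a a ht, Measure.restrict_smul, lintegral_smul_measure]
    rfl
  rw [cov, volume_aBall_scale a a ht s, mul_assoc]
  gcongr

end Geometry

section Gradient

variable {n₁ n₂ : ℕ}

/-- The norm of the partial gradient `∇_{x₁} f`. -/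
noncomputable def gradFst (f : SplitSpace n₁ n₂ → ℝ) (z : SplitSpace n₁ n₂) : ℝ :=
  ‖(fderiv ℝ f z).comp (ContinuousLinearMap.inl ℝ
    (EuclideanSpace ℝ (Fin n₁)) (EuclideanSpace ℝ (Fin n₂)))‖

/-- The norm of the partial gradient `∇_{x₂} f`. -/
noncomputable def gradSnd (f : SplitSpace n₁ n₂ → ℝ) (z : SplitSpace n₁ n₂) : ℝ :=
  ‖(fderiv ℝ f z).comp (ContinuousLinearMap.inr ℝ
    (EuclideanSpace ℝ (Fin n₁)) (EuclideanSpace ℝ (Fin n₂)))‖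

lemma measurable_gradFst (f : SplitSpace n₁ n₂ → ℝ) : Measurable (gradFst f) :=
  (Continuous.measurable (by fun_prop : Continuous fun L : SplitSpace n₁ n₂ →L[ℝ] ℝ =>
    ‖L.comp (ContinuousLinearMap.inl ℝ _ _)‖)).comp (measurable_fderiv ℝ f)

lemma measurable_gradSnd (f : SplitSpace n₁ n₂ → ℝ) : Measurable (gradSnd f) :=
  (Continuous.measurable (by fun_prop : Continuous fun L : SplitSpace n₁ n₂ →L[ℝ] ℝ =>
    ‖L.comp (ContinuousLinearMap.inr ℝ _ _)‖)).comp (measurable_fderiv ℝ f)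

lemma abs_fderiv_apply_le {δ₁ δ₂ : ℝ} (h1 : 0 < δ₁) (h2 : 0 < δ₂) (f : SplitSpace n₁ n₂ → ℝ)
    (w v : SplitSpace n₁ n₂) {r : ℝ} (hv : invANorm δ₁ δ₂ v ≤ r) :
    ‖fderiv ℝ f w v‖ ≤ r * (δ₁ * gradFst f w + δ₂ * gradSnd f w) := by
  have e : fderiv ℝ f w v =
      (fderiv ℝ f w).comp (ContinuousLinearMap.inl ℝ _ _) v.1 +
      (fderiv ℝ f w).comp (ContinuousLinearMap.inr ℝ _ _) v.2 := by
    simp [← map_add]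
  have a1 : ‖v.1‖ ≤ δ₁ * r := (norm_fst_le_invANorm (δ₂ := δ₂) h1 v).trans (by gcongr)
  have a2 : ‖v.2‖ ≤ δ₂ * r := (norm_snd_le_invANorm (δ₁ := δ₁) h2 v).trans (by gcongr)
  calc ‖fderiv ℝ f w v‖ ≤ gradFst f w * ‖v.1‖ + gradSnd f w * ‖v.2‖ := by
        rw [e]
        exact (norm_add_le _ _).trans
          (add_le_add (ContinuousLinearMap.le_opNorm _ _) (ContinuousLinearMap.le_opNorm _ _))
    _ ≤ gradFst f w * (δ₁ * r) + gradSnd f w * (δ₂ * r) := by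
        have b1 : 0 ≤ gradFst f w := norm_nonneg _
        have b2 : 0 ≤ gradSnd f w := norm_nonneg _
        gcongr
    _ = _ := by ring

/-- The function `U = δ₁ M_A g₁ + δ₂ M_A g₂`. -/
noncomputable def maxGrad (δ₁ δ₂ : ℝ) (f : SplitSpace n₁ n₂ → ℝ) (x : SplitSpace n₁ n₂) : ℝ≥0∞ :=
  ENNReal.ofReal δ₁ * maxA δ₁ δ₂ (gradFst f) x + ENNReal.ofReal δ₂ * maxA δ₁ δ₂ (gradSnd f) x

/-- The bound on `φ' t`, uniform in `t > 0`. -/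
lemma enorm_integral_fderiv_le {δ₁ δ₂ : ℝ} (h1 : 0 < δ₁) (h2 : 0 < δ₂)
    (f : SplitSpace n₁ n₂ → ℝ) (x : SplitSpace n₁ n₂) {r t : ℝ} (hr : 0 < r) (ht : 0 < t)
    {W : Set (SplitSpace n₁ n₂)} (hW : W ⊆ aBall δ₁ δ₂ x r) :
    ‖∫ z in W, fderiv ℝ f (x + t • (z - x)) (z - x)‖ₑ ≤
      ENNReal.ofReal r * (volume (aBall δ₁ δ₂ x r) * maxGrad δ₁ δ₂ f x) := by
  have m1 := measurable_gradFst f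
  have m2 := measurable_gradSnd f
  calc ‖∫ z in W, fderiv ℝ f (x + t • (z - x)) (z - x)‖ₑ
      ≤ ∫⁻ z in W, ‖fderiv ℝ f (x + t • (z - x)) (z - x)‖ₑ := enorm_integral_le_lintegral_enorm _
    _ ≤ ∫⁻ z in aBall δ₁ δ₂ x r, ‖fderiv ℝ f (x + t • (z - x)) (z - x)‖ₑ :=
        lintegral_mono_set hW
    _ ≤ ∫⁻ z in aBall δ₁ δ₂ x r, ENNReal.ofReal r *
          (ENNReal.ofReal δ₁ * ‖gradFst f (x + t • (z - x))‖₊ +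
            ENNReal.ofReal δ₂ * ‖gradSnd f (x + t • (z - x))‖₊) := by
        refine setLIntegral_mono (by fun_prop) fun z hz => ?_
        have hz' : invANorm δ₁ δ₂ (z - x) ≤ r := le_of_lt hz
        have b1 : 0 ≤ gradFst f (x + t • (z - x)) := norm_nonneg _
        have b2 : 0 ≤ gradSnd f (x + t • (z - x)) := norm_nonneg _
        rw [← ofReal_norm]
        refine (ENNReal.ofReal_le_ofReal (abs_fderiv_apply_le h1 h2 f _ _ hz')).trans ?_
        rw [ENNReal.ofReal_mul hr.le, ENNReal.ofReal_add (by positivity) (by positivity),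
          ENNReal.ofReal_mul h1.le, ENNReal.ofReal_mul h2.le,
          ← enorm_eq_nnnorm, ← enorm_eq_nnnorm, Real.enorm_of_nonneg b1, Real.enorm_of_nonneg b2]
    _ = ENNReal.ofReal r *
          (ENNReal.ofReal δ₁ * (∫⁻ z in aBall δ₁ δ₂ x r, ‖gradFst f (x + t • (z - x))‖₊) +
            ENNReal.ofReal δ₂ * (∫⁻ z in aBall δ₁ δ₂ x r, ‖gradSnd f (x + t • (z - x))‖₊)) := by
        rw [lintegral_const_mul _ (by fun_prop), lintegral_add_left (by fun_prop),
          lintegral_const_mul _ (by fun_prop), lintegral_const_mul _ (by fun_prop)]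
    _ ≤ ENNReal.ofReal r *
          (ENNReal.ofReal δ₁ * (volume (aBall δ₁ δ₂ x r) * maxA δ₁ δ₂ (gradFst f) x) +
            ENNReal.ofReal δ₂ * (volume (aBall δ₁ δ₂ x r) * maxA δ₁ δ₂ (gradSnd f) x)) := by
        gcongr
        · exact lintegral_rescale_le h1 h2 m1 x ht hr
        · exact lintegral_rescale_le h1 h2 m2 x ht hr
    _ = _ := by
        unfold maxGrad
        ring

/-- Comparison of `f x` with the average of `f` over a subset `W` of `E_r(x)`, with both multiplied
by the measure of `W`. -/
lemma avg_sub_le {δ₁ δ₂ : ℝ} (h1 : 0 < δ₁) (h2 : 0 < δ₂)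
    {f : SplitSpace n₁ n₂ → ℝ} {K : NNReal} (hf : LipschitzWith K f) (x : SplitSpace n₁ n₂)
    {r : ℝ} (hr : 0 < r) {W : Set (SplitSpace n₁ n₂)} (hWm : MeasurableSet W)
    (hW : W ⊆ aBall δ₁ δ₂ x r) :
    ‖(∫ z in W, f z) - volume.real W * f x‖ₑ ≤
      ENNReal.ofReal r * (volume (aBall δ₁ δ₂ x r) * maxGrad δ₁ δ₂ f x) := by
  have hfc := hf.continuous
  have hWtop : volume W < ∞ :=
    (measure_mono hW).trans_lt (volume_aBall_ne_top h1 h2 x r).lt_top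
  have : IsFiniteMeasure (volume.restrict W) := ⟨by simpa using hWtop⟩
  set R : ℝ := (δ₁ + δ₂) * r
  have hR : 0 ≤ R := by positivity
  have hbd : ∀ z ∈ W, ‖z - x‖ ≤ R := fun z hz => norm_sub_le_of_mem_aBall h1 h2 (hW hz)
  have hlip : ∀ z ∈ W, LipschitzWith (K * R.toNNReal) (fun t : ℝ => f (x + t • (z - x))) := by
    intro z hz
    refine LipschitzWith.of_dist_le_mul fun s t => (hf.dist_le_mul _ _).trans ?_
    rw [dist_add_left, dist_eq_norm, ← sub_smul, norm_smul, dist_eq_norm, NNReal.coe_mul,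
      Real.coe_toNNReal _ hR, mul_assoc, mul_comm ‖s - t‖]
    gcongr
    exact hbd z hz
  have hint : ∀ t : ℝ, Integrable (fun z => f (x + t • (z - x))) (volume.restrict W) := by
    intro t
    refine Integrable.of_bound (C := ‖f x‖ + K * R.toNNReal * ‖t‖)
      (by fun_prop : Continuous fun z => f (x + t • (z - x))).aestronglyMeasurable ?_
    filter_upwards [ae_restrict_mem hWm] with z hz
    have := (hlip z hz).dist_le_mul t 0
    simp only [zero_smul, add_zero, dist_eq_norm, sub_zero, NNReal.coe_mul] at this
    have h3 := norm_le_norm_add_norm_sub (f x) (f (x + t • (z - x)))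
    rw [norm_sub_rev] at h3
    linarith
  set φ : ℝ → ℝ := fun t => ∫ z in W, f (x + t • (z - x))
  have hφd : ∀ t > 0, HasDerivAt φ (∫ z in W, fderiv ℝ f (x + t • (z - x)) (z - x)) t := by
    intro t ht
    -- the preimage of a null set under `z ↦ x + t (z - x)` is null
    have hae : ∀ᵐ z : SplitSpace n₁ n₂, DifferentiableAt ℝ f (x + t • (z - x)) := by
      have hq : Measure.QuasiMeasurePreserving
          (fun z : SplitSpace n₁ n₂ => x + t • (z - x)) volume volume := by
        refine ⟨by fun_prop, ?_⟩
        rw [map_homothety x x ht]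
        exact Measure.smul_absolutelyContinuous
      exact hq.ae hf.ae_differentiableAt
    refine (hasDerivAt_integral_of_dominated_loc_of_lip (bound := fun _ => K * R)
      (F := fun t z => f (x + t • (z - x))) (Filter.univ_mem)
      (Filter.Eventually.of_forall fun s => (hint s).aestronglyMeasurable) (hint t) ?_ ?_
      (integrable_const _) ?_).2
    · have hm : Measurable fun z : SplitSpace n₁ n₂ => fderiv ℝ f (x + t • (z - x)) :=
        (measurable_fderiv ℝ f).comp (by fun_prop)
      have : Measurable fun z : SplitSpace n₁ n₂ => fderiv ℝ f (x + t • (z - x)) (z - x) :=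
        (Continuous.measurable (by fun_prop : Continuous fun p :
          (SplitSpace n₁ n₂ →L[ℝ] ℝ) × SplitSpace n₁ n₂ => p.1 p.2)).comp
          (hm.prodMk (by fun_prop))
      exact this.aestronglyMeasurable
    · filter_upwards [ae_restrict_mem hWm] with z hz
      have e : Real.nnabs (K * R) = K * R.toNNReal := by
        ext
        simp [hR]
      rw [e]
      exact (hlip z hz).lipschitzOnWith
    · filter_upwards [ae_restrict_of_ae hae] with z hz
      have hl : HasDerivAt (fun s : ℝ => x + s • (z - x)) (z - x) t := by
        simpa using ((hasDerivAt_id t).smul_const (z - x)).const_add x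
      exact hz.hasFDerivAt.comp_hasDerivAt t hl
  have hφc : Continuous φ := by
    refine continuous_iff_continuousAt.2 fun t => ?_
    refine continuousAt_of_dominated (bound := fun _ => ‖f x‖ + K * R.toNNReal * (‖t‖ + 1))
      (Filter.Eventually.of_forall fun s => (hint s).aestronglyMeasurable) ?_
      (integrable_const _) (Filter.Eventually.of_forall fun z => by fun_prop)
    filter_upwards [Metric.ball_mem_nhds t one_pos] with s hs
    filter_upwards [ae_restrict_mem hWm] with z hz
    have hst : ‖s‖ ≤ ‖t‖ + 1 := by
      have := norm_le_norm_add_norm_sub t s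
      rw [mem_ball_iff_norm] at hs
      rw [norm_sub_rev] at this
      linarith
    have := (hlip z hz).dist_le_mul s 0
    simp only [zero_smul, add_zero, dist_eq_norm, sub_zero, NNReal.coe_mul] at this
    have h3 := norm_le_norm_add_norm_sub (f x) (f (x + s • (z - x)))
    rw [norm_sub_rev] at h3
    have h4 : (K : ℝ) * R.toNNReal * ‖s‖ ≤ K * R.toNNReal * (‖t‖ + 1) := by gcongr
    linarith
  obtain ⟨c, hc, hc'⟩ := exists_hasDerivAt_eq_slope φ _ one_pos hφc.continuousOn
    (fun t ht => hφd t ht.1)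
  have e : (∫ z in W, f z) - volume.real W * f x = φ 1 - φ 0 := by
    simp [φ]
  rw [e]
  simp only [sub_zero, div_one] at hc'
  rw [← hc']
  exact enorm_integral_fderiv_le h1 h2 f x hr hc.1 hW

end Gradient

/-- **Anisotropic estimate on difference quotients of a Lipschitz function.** There is a
constant `C_N` depending only on `N = n₁ + n₂` such that for all `0 < δ₁ ≤ δ₂` and every
Lipschitz `f : ℝ^N → ℝ` there is a negligible set `𝒩` with
`|f x − f y| ≤ C_N |A⁻¹(x − y)| (U x + U y)` for `x, y ∉ 𝒩`, where
`U = δ₁ M_A g₁ + δ₂ M_A g₂` and `g₁, g₂` are the norms of the partial gradients of `f`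
in the `x₁`- and `x₂`-directions (defined a.e. by Rademacher, `0` where `f` is not
differentiable). -/
theorem lipschitz_anisotropic_diff_quotient (n₁ n₂ : ℕ) :
    ∃ C : ℝ, 0 < C ∧
      ∀ (δ₁ δ₂ : ℝ), 0 < δ₁ → δ₁ ≤ δ₂ →
        ∀ (f : SplitSpace n₁ n₂ → ℝ) (K : NNReal), LipschitzWith K f →
          ∃ 𝒩 : Set (SplitSpace n₁ n₂), volume 𝒩 = 0 ∧
            ∀ x ∉ 𝒩, ∀ y ∉ 𝒩,
              ENNReal.ofReal |f x - f y| ≤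
                ENNReal.ofReal (C * invANorm δ₁ δ₂ (x - y)) *
                  ((ENNReal.ofReal δ₁ * maxA δ₁ δ₂
                      (fun z => ‖(fderiv ℝ f z).comp (ContinuousLinearMap.inl ℝ
                        (EuclideanSpace ℝ (Fin n₁)) (EuclideanSpace ℝ (Fin n₂)))‖) x +
                    ENNReal.ofReal δ₂ * maxA δ₁ δ₂
                      (fun z => ‖(fderiv ℝ f z).comp (ContinuousLinearMap.inr ℝ
                        (EuclideanSpace ℝ (Fin n₁)) (EuclideanSpace ℝ (Fin n₂)))‖) x) +
                   (ENNReal.ofReal δ₁ * maxA δ₁ δ₂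
                      (fun z => ‖(fderiv ℝ f z).comp (ContinuousLinearMap.inl ℝ
                        (EuclideanSpace ℝ (Fin n₁)) (EuclideanSpace ℝ (Fin n₂)))‖) y +
                    ENNReal.ofReal δ₂ * maxA δ₁ δ₂
                      (fun z => ‖(fderiv ℝ f z).comp (ContinuousLinearMap.inr ℝ
                        (EuclideanSpace ℝ (Fin n₁)) (EuclideanSpace ℝ (Fin n₂)))‖) y)) := by
  refine ⟨2 ^ (n₁ + n₂), by positivity, fun δ₁ δ₂ h1 h12 f K hf => ⟨∅, measure_empty,
    fun x _ y _ => ?_⟩⟩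
  have h2 : 0 < δ₂ := h1.trans_le h12
  change _ ≤ _ * (maxGrad δ₁ δ₂ f x + maxGrad δ₁ δ₂ f y)
  rcases eq_or_ne x y with rfl | hxy
  · simp
  set r := invANorm δ₁ δ₂ (x - y) with hrdef
  have hr : 0 < r := invANorm_pos h1 h2 (sub_ne_zero.2 hxy)
  set m : SplitSpace n₁ n₂ := (1 / 2 : ℝ) • (x + y)
  set W := aBall δ₁ δ₂ m (1 / 2 * r)
  have hsub : ∀ a : SplitSpace n₁ n₂, invANorm δ₁ δ₂ (m - a) = 1 / 2 * r →
      W ⊆ aBall δ₁ δ₂ a r := by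
    intro a ha z hz
    have hz' : invANorm δ₁ δ₂ (z - m) < 1 / 2 * r := hz
    have := invANorm_add_le h1 h2 (z - m) (m - a)
    rw [sub_add_sub_cancel] at this
    change invANorm δ₁ δ₂ (z - a) < r
    linarith
  have hx : m - x = (-(1 / 2) : ℝ) • (x - y) := by
    simp only [m]
    module
  have hy : m - y = (1 / 2 : ℝ) • (x - y) := by
    simp only [m]
    module
  have hWx : W ⊆ aBall δ₁ δ₂ x r := hsub x (by
    rw [hx, invANorm_smul, abs_neg, abs_of_pos one_half_pos])
  have hWy : W ⊆ aBall δ₁ δ₂ y r := hsub y (by rw [hy, invANorm_smul, abs_of_pos one_half_pos])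
  have hWm : MeasurableSet W := (isOpen_aBall m _).measurableSet
  have hW0 : volume W ≠ 0 := volume_aBall_ne_zero m (by positivity)
  have hWt : volume W ≠ ∞ := volume_aBall_ne_top h1 h2 m _
  have vol : ∀ a : SplitSpace n₁ n₂,
      volume (aBall δ₁ δ₂ a r) = ENNReal.ofReal (2 ^ (n₁ + n₂)) * volume W := by
    intro a
    rw [volume_aBall_scale a m (one_half_pos (α := ℝ)) r]
    simp [W]
  have ex := avg_sub_le h1 h2 hf x hr hWm hWx
  have ey := avg_sub_le h1 h2 hf y hr hWm hWy
  rw [vol] at ex ey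
  have split : volume.real W * (f x - f y) =
      ((∫ z in W, f z) - volume.real W * f y) - ((∫ z in W, f z) - volume.real W * f x) := by
    ring
  have main : volume W * ENNReal.ofReal |f x - f y| ≤ volume W *
      (ENNReal.ofReal (2 ^ (n₁ + n₂) * r) * (maxGrad δ₁ δ₂ f x + maxGrad δ₁ δ₂ f y)) := by
    calc volume W * ENNReal.ofReal |f x - f y| = ‖volume.real W * (f x - f y)‖ₑ := by
          rw [enorm_mul, Real.enorm_of_nonneg measureReal_nonneg, ofReal_measureReal hWt,
            Real.enorm_eq_ofReal_abs]
      _ ≤ ENNReal.ofReal r * (ENNReal.ofReal (2 ^ (n₁ + n₂)) * volume W * maxGrad δ₁ δ₂ f y) +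
          ENNReal.ofReal r * (ENNReal.ofReal (2 ^ (n₁ + n₂)) * volume W * maxGrad δ₁ δ₂ f x) := by
          rw [split]
          exact enorm_sub_le.trans (add_le_add ey ex)
      _ = _ := by
          rw [ENNReal.ofReal_mul (by positivity)]
          ring
  exact (ENNReal.mul_le_mul_iff_right hW0 hWt).1 main
end
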